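/- The space M_F is not extremally disconnected: there exists an open subset of M_F whose closure is not open. -/

import Mathlib

open MeasureTheory Topology Set Pointwise

/-- The set of all real-valued measurable functions on `X`, as a subtype. -/
abbrev Mble (X : Type*) [MeasurableSpace X] : Type _ := {f : X → ℝ // Measurable f}

/-- The basic set `B(f, A, ε)`: all `g` such that for some measurable null set `N`,
`sup_{x ∈ A \ N} |f x - g x| < ε`. -/
def FBall {X : Type*} [MeasurableSpace X] (μ : Measure X) (f : Mble X) (A : Set X)
    (ε : ℝ) : Set (Mble X) :=
  {g | ∃ N : Set X, MeasurableSet N ∧ μ N = 0 ∧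
        ∃ b : ℝ, b < ε ∧ ∀ x ∈ A \ N, |f.1 x - g.1 x| ≤ b}

/-- The `F_μ`-topology on `Mble X`, generated by the sets `B(f, A, ε)` with
`A` measurable of finite measure and `ε > 0`. -/
def FTop {X : Type*} [MeasurableSpace X] (μ : Measure X) : TopologicalSpace (Mble X) :=
  TopologicalSpace.generateFrom
    {S | ∃ (f : Mble X) (A : Set X) (ε : ℝ),
        MeasurableSet A ∧ μ A < ⊤ ∧ 0 < ε ∧ S = FBall μ f A ε}

/-- A `μ`-atom: a measurable set of positive measure admitting no decomposition into two
disjoint measurable pieces of positive measure. -/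
def MuAtom {X : Type*} [MeasurableSpace X] (μ : Measure X) (A : Set X) : Prop :=
  MeasurableSet A ∧ 0 < μ A ∧
    ¬ ∃ B C : Set X, MeasurableSet B ∧ MeasurableSet C ∧ Disjoint B C ∧
        B ∪ C = A ∧ 0 < μ B ∧ 0 < μ C

/-- `G` is a union of finitely many `μ`-atoms. -/
def FinAtomUnion {X : Type*} [MeasurableSpace X] (μ : Measure X) (G : Set X) : Prop :=
  ∃ (n : ℕ) (F : Fin n → Set X), (∀ i, MuAtom μ (F i)) ∧ G = ⋃ i, F i

/-- `L^∞_G`: the measurable functions that are essentially bounded on `G`. -/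
def Linf {X : Type*} [MeasurableSpace X] (μ : Measure X) (G : Set X) : Set (Mble X) :=
  {f | ∃ M₀ : ℝ, 0 < M₀ ∧ ∃ N : Set X, MeasurableSet N ∧ μ N = 0 ∧
        ∀ x ∈ G \ N, |f.1 x| ≤ M₀}

/-- The intersection `⋂_{G ∈ 𝒜_>} L^∞_G`. -/
def InterLinf {X : Type*} [MeasurableSpace X] (μ : Measure X) : Set (Mble X) :=
  ⋂ G ∈ {A : Set X | MeasurableSet A ∧ 0 < μ A ∧ μ A < ⊤}, Linf μ G

/-- The zero function as an element of `Mble X`. -/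
def zeroM {X : Type*} [MeasurableSpace X] : Mble X := ⟨fun _ => 0, measurable_const⟩

/-- `μ` is hemifinite: some sequence in `𝒜_>` almost contains every member of `𝒜_>`. -/
def Hemifinite {X : Type*} [MeasurableSpace X] (μ : Measure X) : Prop :=
  ∃ A : ℕ → Set X, (∀ n, MeasurableSet (A n) ∧ 0 < μ (A n) ∧ μ (A n) < ⊤) ∧
    ∀ F : Set X, MeasurableSet F → 0 < μ F → μ F < ⊤ → ∃ n, μ (F \ A n) = 0

/-- `G⁺`: functions strictly positive μ-almost everywhere on `G`. -/
def Gplus {X : Type*} [MeasurableSpace X] (μ : Measure X) (G : Set X) : Set (Mble X) :=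
  {f | ∃ N : Set X, MeasurableSet N ∧ μ N = 0 ∧ ∀ x ∈ G \ N, 0 < f.1 x}

/-- `G⁰`: functions nonnegative μ-almost everywhere on `G`. -/
def Gzero {X : Type*} [MeasurableSpace X] (μ : Measure X) (G : Set X) : Set (Mble X) :=
  {f | ∃ N : Set X, MeasurableSet N ∧ μ N = 0 ∧ ∀ x ∈ G \ N, 0 ≤ f.1 x}

instance {X : Type*} [MeasurableSpace X] : Add (Mble X) :=
  ⟨fun f g => ⟨f.1 + g.1, f.2.add g.2⟩⟩

/-! Uniform convergence implies convergence in the `F_μ`-topology, so the constant functions form a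
connected set. If the closure of `B(0, A, 1)` were open, it would be clopen and, containing the
constant `0`, would contain every constant. But when `0 < μ A < ∞` the constant `2` has the
neighbourhood `B(2, A, 1)`, which is disjoint from `B(0, A, 1)`. -/

section

variable {X : Type*} [MeasurableSpace X] {μ : Measure X} {f g : Mble X} {A : Set X} {ε δ : ℝ}

lemma mem_fBall_iff_ae :
    g ∈ FBall μ f A ε ↔ ∃ b < ε, ∀ᵐ x ∂μ, x ∈ A → |f.1 x - g.1 x| ≤ b := by
  constructor
  · rintro ⟨N, -, hN, b, hb, hle⟩
    exact ⟨b, hb, (measure_eq_zero_iff_ae_notMem.1 hN).mono fun x hxN hxA => hle x ⟨hxA, hxN⟩⟩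
  · rintro ⟨b, hb, hle⟩
    obtain ⟨N, hsubset, hNmeas, hN⟩ := exists_measurable_superset_of_null (ae_iff.1 hle)
    exact ⟨N, hNmeas, hN, b, hb, fun x hx => by_contra fun hlt =>
      hx.2 (hsubset fun himp => hlt (himp hx.1))⟩

lemma mem_fBall_self (hε : 0 < ε) : f ∈ FBall μ f A ε :=
  mem_fBall_iff_ae.2 ⟨0, hε, .of_forall fun x _ => by rw [sub_self, abs_zero]⟩

lemma isOpen_fBall (hA : MeasurableSet A) (hA_lt_top : μ A < ⊤) (hε : 0 < ε) :
    IsOpen[FTop μ] (FBall μ f A ε) :=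
  TopologicalSpace.isOpen_generateFrom_of_mem ⟨f, A, ε, hA, hA_lt_top, hε, rfl⟩

lemma disjoint_fBall (hA_ne : μ A ≠ 0) (hfg : ∀ᵐ x ∂μ, x ∈ A → ε + δ ≤ |f.1 x - g.1 x|) :
    Disjoint (FBall μ f A ε) (FBall μ g A δ) := by
  refine disjoint_left.2 fun h hf hg => hA_ne (measure_eq_zero_iff_ae_notMem.2 ?_)
  obtain ⟨b, hb, hfh⟩ := mem_fBall_iff_ae.1 hf
  obtain ⟨c, hc, hgh⟩ := mem_fBall_iff_ae.1 hg
  filter_upwards [hfg, hfh, hgh] with x hfg hfh hgh hxA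
  have htriangle : |f.1 x - g.1 x| ≤ |f.1 x - h.1 x| + |g.1 x - h.1 x| :=
    abs_sub_comm (g.1 x) (h.1 x) ▸ abs_sub_le _ _ _
  linarith [hfg hxA, hfh hxA, hgh hxA]

lemma exists_forall_dist_lt_mem_fBall (hg : g ∈ FBall μ f A ε) :
    ∃ δ > 0, ∀ h : Mble X, (∀ x, dist (g.1 x) (h.1 x) < δ) → h ∈ FBall μ f A ε := by
  obtain ⟨b, hb, hfg⟩ := mem_fBall_iff_ae.1 hg
  obtain ⟨c, hbc, hcε⟩ := exists_between hb
  refine ⟨c - b, sub_pos.2 hbc, fun h hgh => mem_fBall_iff_ae.2 ⟨c, hcε, ?_⟩⟩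
  filter_upwards [hfg] with x hfg hxA
  calc |f.1 x - h.1 x| ≤ |f.1 x - g.1 x| + |g.1 x - h.1 x| := abs_sub_le _ _ _
    _ ≤ b + (c - b) := add_le_add (hfg hxA) (hgh x).le
    _ = c := add_sub_cancel b c

lemma continuous_fTop_of_tendstoUniformly {T : Type*} [tT : TopologicalSpace T] {F : T → Mble X}
    (hF : ∀ t, TendstoUniformly (fun s => (F s).1) (F t).1 (𝓝 t)) :
    Continuous[tT, FTop μ] F := by
  refine continuous_generateFrom_iff.2 ?_
  rintro _ ⟨f, A, ε, -, -, -, rfl⟩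
  refine isOpen_iff_mem_nhds.2 fun t ht => ?_
  obtain ⟨δ, hδ, hball⟩ := exists_forall_dist_lt_mem_fBall ht
  exact (Metric.tendstoUniformly_iff.1 (hF t) δ hδ).mono fun s hs => hball (F s) hs

/-- The constant function with value `t`, as an element of `Mble X`; these functions form the
connected set that witnesses the failure of extremal disconnectedness. -/
def constM (t : ℝ) : Mble X := ⟨fun _ => t, measurable_const⟩

lemma continuous_constM : Continuous[inferInstance, FTop μ] (constM : ℝ → Mble X) :=
  continuous_fTop_of_tendstoUniformly fun _ => Metric.tendstoUniformly_iff.2 fun ε hε =>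
    Metric.eventually_nhds_iff_ball.2 ⟨ε, hε, fun _ hs _ => Metric.mem_ball'.1 hs⟩

lemma exists_subset_measurableSet_pos_lt_top
    (hsub : ∀ A : Set X, MeasurableSet A → μ A = ⊤ →
      ∃ B, B ⊆ A ∧ MeasurableSet B ∧ 0 < μ B ∧ μ B < ⊤)
    (hA : MeasurableSet A) (hA_pos : 0 < μ A) :
    ∃ B, B ⊆ A ∧ MeasurableSet B ∧ 0 < μ B ∧ μ B < ⊤ := by
  rcases eq_top_or_lt_top (μ A) with hA_top | hA_lt_top
  · exact hsub A hA hA_top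
  · exact ⟨A, Subset.rfl, hA, hA_pos, hA_lt_top⟩

theorem stmt13_general (hA : MeasurableSet A) (hA_pos : 0 < μ A) (hA_lt_top : μ A < ⊤) :
    ∃ U : Set (Mble X), IsOpen[FTop μ] U ∧
      ¬ IsOpen[FTop μ] (@closure (Mble X) (FTop μ) U) := by
  let _ : TopologicalSpace (Mble X) := FTop μ
  refine ⟨FBall μ (constM 0) A 1, isOpen_fBall hA hA_lt_top one_pos, fun hopen => ?_⟩
  have hrange : range constM ⊆ closure (FBall μ (constM 0) A 1) :=
    (isPreconnected_range continuous_constM).subset_isClopen ⟨isClosed_closure, hopen⟩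
      ⟨constM 0, mem_range_self 0, subset_closure (mem_fBall_self one_pos)⟩
  have hdisjoint : Disjoint (FBall μ (constM 0) A 1) (FBall μ (constM 2) A 1) :=
    disjoint_fBall hA_pos.ne' (.of_forall fun x _ => by norm_num [constM])
  exact (hdisjoint.closure_left (isOpen_fBall hA hA_lt_top one_pos)).notMem_of_mem_left
    (hrange (mem_range_self 2)) (mem_fBall_self one_pos)

end

/-- `M_F` is not extremally disconnected. -/
theorem stmt13 {X : Type*} [MeasurableSpace X] (μ : Measure X)
    (hpos : 0 < μ Set.univ)
    (hsub : ∀ A : Set X, MeasurableSet A → μ A = ⊤ →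
      ∃ B, B ⊆ A ∧ MeasurableSet B ∧ 0 < μ B ∧ μ B < ⊤) :
    ∃ U : Set (Mble X), IsOpen[FTop μ] U ∧
      ¬ IsOpen[FTop μ] (@closure (Mble X) (FTop μ) U) := by
  obtain ⟨A, -, hA, hA_pos, hA_lt_top⟩ :=
    exists_subset_measurableSet_pos_lt_top hsub MeasurableSet.univ hpos
  exact stmt13_general hA hA_pos hA_lt_top
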